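/- Let $n \ge 2$, $p \ge 1$, and $v^1,\dots,v^p \in \mathbb{R}^n$. Let $P$ be the tropical polytope generated by these points, i.e. the set of all $x \in \mathbb{R}^n$ for which there is $\lambda \in \mathbb{R}^p$ with $x_i = \max_{1 \le r \le p} (\lambda_r + v^r_i)$ for all $i \in \{1,\dots,n\}$. Say that $P$ is pure if $P_0 := \{x \in P : x_1 = 0\}$ equals the closure of its interior, both taken relative to the hyperplane $\{x \in \mathbb{R}^n : x_1 = 0\}$. For $a \in \mathbb{R}^n$ and a nonempty proper subset $I \subset \{1,\dots,n\}$, let $$H(a,I) := \{x \in \mathbb{R}^n : \max_{i \in I}(x_i - a_i) \ge \max_{j \notin I}(x_j - a_j)\},$$ and for $i \in \{1,\dots,n\}$ let $S_i(a) := \{r : v^r_i - a_i \ge v^r_k - a_k \text{ for all } k \in \{1,\dots,n\}\}$. For a nonempty proper subset $I \subset \{1,\dots,n\}$ and $j \in \{1,\dots,n\} \setminus I$, call $a$ an $(I,j)$-pseudovertex of $P$ if (i) $\bigcup_{i \in I} S_i(a) = \{1,\dots,p\}$; (ii) for each $k \in \{1,\dots,n\} \setminus I$ there is $i \in I$ with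 $S_i(a) \cap S_k(a) \ne \emptyset$; (iii) for each $i \in I$, $S_i(a) \cap S_j(a) \not\subseteq \bigcup_{h \in I \setminus \{i\}} S_h(a)$. If $P$ is pure, then the set of all half-spaces $H(a,I)$ such that $a$ is an $(I,j)$-pseudovertex of $P$ for some nonempty proper subset $I \subset \{1,\dots,n\}$ and some $j \in \{1,\dots,n\} \setminus I$ is finite, and $P$ equals the intersection of these half-spaces. -/

import Mathlib

/-- The sector `S(a,i) = {x | x_i - a_i ≥ x_j - a_j for all j}`. -/
def sector {n : ℕ} (a : Fin n → ℝ) (i : Fin n) : Set (Fin n → ℝ) :=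
  {x | ∀ j, x j - a j ≤ x i - a i}

/-- The tropical polytope generated by the points `v 0, …, v (p-1)`: the points `x` for which
there are scalars `l r` such that each coordinate `x i` is the maximum over `r` of `l r + v r i`. -/
def tropPoly {n p : ℕ} (v : Fin p → Fin n → ℝ) : Set (Fin n → ℝ) :=
  {x | ∃ l : Fin p → ℝ, ∀ i, IsGreatest (Set.range fun r => l r + v r i) (x i)}

/-- The tropical half-space `H(a,I)`: `max_{i ∈ I} (x_i - a_i) ≥ max_{j ∉ I} (x_j - a_j)`,
for a nonempty proper subset `I`. -/
def halfSpace {n : ℕ} (a : Fin n → ℝ) (I : Set (Fin n)) : Set (Fin n → ℝ) :=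
  {x | ∃ i ∈ I, ∀ j ∉ I, x j - a j ≤ x i - a i}

/-- `S_i(a)`, the set of indices `r` such that `v r ∈ S(a,i)`. -/
def typeSet {n p : ℕ} (v : Fin p → Fin n → ℝ) (a : Fin n → ℝ) (i : Fin n) : Set (Fin p) :=
  {r | v r ∈ sector a i}

/-- `a` is an `(I,j)`-pseudovertex of the tropical polytope generated by `v`, where `I` is a
nonempty proper subset of the index set and `j ∉ I`. -/
structure IsPseudovertex {n p : ℕ} (v : Fin p → Fin n → ℝ) (a : Fin n → ℝ) (I : Set (Fin n))
    (j : Fin n) : Prop where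
  nonempty : I.Nonempty
  proper : I ≠ Set.univ
  notMem : j ∉ I
  cover : (⋃ i ∈ I, typeSet v a i) = Set.univ
  touch : ∀ k ∉ I, ∃ i ∈ I, (typeSet v a i ∩ typeSet v a k).Nonempty
  tight : ∀ i ∈ I, ¬ typeSet v a i ∩ typeSet v a j ⊆ ⋃ h ∈ I \ {i}, typeSet v a h

/-- The set of all half-spaces `H(a,I)` such that `a` is an `(I,j)`-pseudovertex for some `j`. -/
def pseudovertexHalfSpaces {n p : ℕ} (v : Fin p → Fin n → ℝ) : Set (Set (Fin n → ℝ)) :=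
  {H | ∃ (a : Fin n → ℝ) (I : Set (Fin n)) (j : Fin n), IsPseudovertex v a I j ∧ H = halfSpace a I}

/-- `P` is pure: `P₀ = {x ∈ P | x 0 = 0}` equals the closure of its interior, relative to
the hyperplane `{x | x 0 = 0}` with the subspace topology. -/
def IsPure {n : ℕ} [NeZero n] (P : Set (Fin n → ℝ)) : Prop :=
  letI P₀ : Set {x : Fin n → ℝ // x 0 = 0} := {x | (x : Fin n → ℝ) ∈ P}
  P₀ = closure (interior P₀)

/-!
A point `y` outside `P` has a coordinate `j` such that every generator `v r` satisfies
`y i - y j < v r i - v r j` for some `i`. Hence there are thresholds `b` with `y i - y j < b i`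
such that every generator reaches one of them: `b i ≤ v r i - v r j` for some `i`, where `b i = ⊤`
excludes the coordinate `i`. Choosing `b` with values in the finite set
of all `v r i - v r j` and `⊤`, we may take it maximal. By maximality each finite threshold `b i` is
attained with equality by a generator that reaches no other threshold, which is condition (iii).
With `I` the set of coordinates whose threshold is finite, setting `a = b` on `I` and choosing the
remaining coordinates of `a` as small as possible gives an `(I, j)`-pseudovertex `a` with
`y ∉ H(a, I)`.

Finiteness holds because any coordinate `k` of an `(I, j)`-pseudovertex `a` is linked to `j` through
some `i`, by generators in `S_i(a) ∩ S_k(a)` and `S_i(a) ∩ S_j(a)`, and these determine `a k - a j`.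
-/

section Thresholds

variable {ι κ α : Type*}

/-- The thresholds each of which is `⊤` or an entry of `w` in the same column: a finite set in which
to look for maximal thresholds. -/
def entryThresholds (w : κ → ι → α) : Set (ι → WithTop α) :=
  {b | ∀ i, b i ≠ ⊤ → ∃ r, (w r i : WithTop α) = b i}

theorem finite_entryThresholds [Finite ι] [Finite κ] (w : κ → ι → α) :
    (entryThresholds w).Finite := by
  have hcolumns : (Set.univ.pi fun i => insert ⊤ (Set.range fun r => (w r i : WithTop α))).Finite :=
    Set.Finite.pi fun i => (Set.finite_range _).insert ⊤
  exact hcolumns.subset fun b hb i _ => or_iff_not_imp_left.2 (hb i)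

variable [LinearOrder α]

theorem exists_withTop_min {s : Set κ} (hs : s.Finite) (f : κ → α) :
    ∃ c : WithTop α, (∀ r ∈ s, c ≤ f r) ∧ (c ≠ ⊤ → ∃ r ∈ s, (f r : WithTop α) = c) := by
  rcases s.eq_empty_or_nonempty with rfl | hne
  · exact ⟨⊤, by simp, by simp⟩
  · obtain ⟨m, hm, hmin⟩ := Set.exists_min_image s f hs hne
    exact ⟨f m, fun r hr => WithTop.coe_le_coe.2 (hmin r hr), fun _ => ⟨m, hm, rfl⟩⟩

/-- Thresholds `b` such that every row of the matrix `w` reaches at least one of them. The value `⊤`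
means that the coordinate has no threshold, as no entry of `w` reaches it. -/
def IsThresholdCover (w : κ → ι → α) (b : ι → WithTop α) : Prop :=
  ∀ r, ∃ i, b i ≤ w r i

theorem exists_entryThresholds_isThresholdCover [Finite κ] (w : κ → ι → α) (z : ι → α)
    (hz : ∀ r, ∃ i, z i < w r i) :
    ∃ b ∈ entryThresholds w, IsThresholdCover w b ∧ ∀ i, z i < b i := by
  choose b hb_le hb_attained using fun i =>
    exists_withTop_min (Set.toFinite {r | z i < w r i}) (fun r => w r i)
  refine ⟨b, fun i hi => (hb_attained i hi).imp fun _ h => h.2,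
    fun r => (hz r).imp fun i hi => hb_le i r hi, fun i => ?_⟩
  by_cases hi : b i = ⊤
  · exact hi ▸ WithTop.coe_lt_top (z i)
  · obtain ⟨r, hr, hrb⟩ := hb_attained i hi
    exact hrb ▸ WithTop.coe_lt_coe.2 hr

theorem exists_row_of_maximal_isThresholdCover [Finite κ] {w : κ → ι → α} {b : ι → WithTop α}
    (hb : Maximal (fun b => b ∈ entryThresholds w ∧ IsThresholdCover w b) b) {i : ι}
    (hi : b i ≠ ⊤) : ∃ r, (w r i : WithTop α) = b i ∧ ∀ h ≠ i, w r h < b h := by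
  classical
  obtain ⟨hentry, hcover⟩ := hb.prop
  obtain ⟨c, hc_le, hc_attained⟩ :=
    exists_withTop_min (Set.toFinite {r | ∀ h ≠ i, w r h < b h}) (fun r => w r i)
  have hbc : b i ≤ c := by
    by_cases hc : c = ⊤
    · exact hc ▸ le_top
    · obtain ⟨r, hr, rfl⟩ := hc_attained hc
      obtain ⟨h, hh⟩ := hcover r
      obtain rfl : h = i := by_contra fun hne => (hr h hne).not_ge hh
      exact hh
  have hraised_entry : Function.update b i c ∈ entryThresholds w := by
    intro h
    rcases eq_or_ne h i with rfl | hne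
    · simpa using fun hc => (hc_attained hc).imp fun _ hr => hr.2
    · simpa [hne] using hentry h
  have hraised_cover : IsThresholdCover w (Function.update b i c) := by
    intro r
    by_cases hr : ∀ h ≠ i, w r h < b h
    · exact ⟨i, by simpa using hc_le r hr⟩
    · push Not at hr
      obtain ⟨h, hne, hh⟩ := hr
      exact ⟨h, by simpa [hne] using hh⟩
  have hraised_le := hb.le_of_ge ⟨hraised_entry, hraised_cover⟩ (le_update_self_iff.2 hbc)
  obtain rfl : c = b i := hbc.antisymm' (by simpa using hraised_le i)
  obtain ⟨r, hr, hri⟩ := hc_attained hi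
  exact ⟨r, hri, hr⟩

theorem exists_irredundant_thresholds [Finite ι] [Finite κ] (w : κ → ι → α) (z : ι → α)
    (hz : ∀ r, ∃ i, z i < w r i) :
    ∃ (I : Set ι) (b : ι → α), (∀ r, ∃ i ∈ I, b i ≤ w r i) ∧ (∀ i ∈ I, z i < b i) ∧
      ∀ i ∈ I, ∃ r, w r i = b i ∧ ∀ h ∈ I, h ≠ i → w r h < b h := by
  obtain ⟨b₀, hb₀_entry, hb₀_cover, hzb₀⟩ := exists_entryThresholds_isThresholdCover w z hz
  obtain ⟨b, hb₀b, hb⟩ := ((finite_entryThresholds w).inter_of_left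
    {b | IsThresholdCover w b}).exists_le_maximal ⟨hb₀_entry, hb₀_cover⟩
  let b' : ι → α := fun i => (b i).untopD (z i)
  have hb' : ∀ i, b i ≠ ⊤ → b i = b' i := fun i hi => by
    obtain ⟨c, hc⟩ := WithTop.ne_top_iff_exists.1 hi
    simp only [b', ← hc, WithTop.untopD_coe]
  refine ⟨{i | b i ≠ ⊤}, b', fun r => ?_, fun i hi => ?_, fun i hi => ?_⟩
  · obtain ⟨i, hi⟩ := hb.prop.2 r
    have htop : b i ≠ ⊤ := (hi.trans_lt (WithTop.coe_lt_top _)).ne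
    exact ⟨i, htop, WithTop.coe_le_coe.1 (hb' i htop ▸ hi)⟩
  · exact WithTop.coe_lt_coe.1 (hb' i hi ▸ (hzb₀ i).trans_le (hb₀b i))
  · obtain ⟨r, hri, hrh⟩ := exists_row_of_maximal_isThresholdCover hb hi
    exact ⟨r, WithTop.coe_inj.1 (hri.trans (hb' i hi)),
      fun h hh hne => WithTop.coe_lt_coe.1 (hb' h hh ▸ hrh h hne)⟩

end Thresholds

section TropicalPolytope

variable {n p : ℕ} {v : Fin p → Fin n → ℝ} {a : Fin n → ℝ} {I : Set (Fin n)} {i j k : Fin n}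

theorem sub_eq_sub_of_mem_typeSet {r : Fin p} (hi : r ∈ typeSet v a i) (hk : r ∈ typeSet v a k) :
    a k - a i = v r k - v r i := by
  linarith [hi k, hk i]

theorem mem_typeSet_of_sub_le_sub {r : Fin p} (hi : r ∈ typeSet v a i)
    (hik : v r i - a i ≤ v r k - a k) : r ∈ typeSet v a k :=
  fun l => (hi l).trans hik

theorem iUnion_typeSet_eq_univ_iff :
    (⋃ i ∈ I, typeSet v a i) = Set.univ ↔ ∀ r, ∃ i ∈ I, r ∈ typeSet v a i := by
  simp only [Set.eq_univ_iff_forall, Set.mem_iUnion, exists_prop]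

theorem mem_tropPoly_of_forall_typeSet_nonempty (h : ∀ i, (typeSet v a i).Nonempty) :
    a ∈ tropPoly v := by
  -- The largest admissible scalars, by residuation.
  let l : Fin p → ℝ := fun r => ⨅ k, (a k - v r k)
  have hl_le : ∀ r k, l r ≤ a k - v r k := fun r => ciInf_le (Set.finite_range _).bddBelow
  refine ⟨l, fun i => ⟨?_, ?_⟩⟩
  · obtain ⟨r, hr⟩ := h i
    have : Nonempty (Fin n) := ⟨i⟩
    have hle_l : a i - v r i ≤ l r := le_ciInf fun k => by linarith [hr k]
    exact ⟨r, by linarith [hl_le r i]⟩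
  · rintro _ ⟨r, rfl⟩
    linarith [hl_le r i]

theorem tropPoly_subset_halfSpace (hI : I.Nonempty)
    (hcover : (⋃ i ∈ I, typeSet v a i) = Set.univ) : tropPoly v ⊆ halfSpace a I := by
  rintro x ⟨l, hl⟩
  obtain ⟨i, hi, hmax⟩ := Set.exists_max_image I (fun i => x i - a i) I.toFinite hI
  refine ⟨i, hi, fun k _ => ?_⟩
  obtain ⟨r, hr : l r + v r k = x k⟩ := (hl k).1
  obtain ⟨h, hh, hrh⟩ := iUnion_typeSet_eq_univ_iff.1 hcover r
  have hlh : l r + v r h ≤ x h := (hl h).2 ⟨r, rfl⟩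
  calc x k - a k = l r + (v r k - a k) := by rw [← hr, add_sub_assoc]
    _ ≤ l r + (v r h - a h) := add_le_add_right (hrh k) _
    _ ≤ x h - a h := by linarith
    _ ≤ x i - a i := hmax h hh

theorem halfSpace_sub_const (a : Fin n → ℝ) (I : Set (Fin n)) (c : ℝ) :
    halfSpace (fun k => a k - c) I = halfSpace a I := by
  simp only [halfSpace, sub_sub_eq_add_sub, add_sub_right_comm, add_le_add_iff_right]

theorem IsPseudovertex.exists_typeSet_inter_nonempty (ha : IsPseudovertex v a I j) (k : Fin n) :
    ∃ i, (typeSet v a i ∩ typeSet v a k).Nonempty ∧ (typeSet v a i ∩ typeSet v a j).Nonempty := by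
  have hj : ∀ i ∈ I, (typeSet v a i ∩ typeSet v a j).Nonempty :=
    fun i hi => (Set.not_subset.1 (ha.tight i hi)).imp fun _ h => h.1
  by_cases hk : k ∈ I
  · exact ⟨k, by simpa using (hj k hk).left, hj k hk⟩
  · obtain ⟨i, hi, hik⟩ := ha.touch k hk
    exact ⟨i, hik, hj i hi⟩

open scoped Pointwise in
theorem finite_pseudovertexHalfSpaces (v : Fin p → Fin n → ℝ) :
    (pseudovertexHalfSpaces v).Finite := by
  let D : Set ℝ := Set.range fun q : Fin p × Fin n × Fin n => v q.1 q.2.1 - v q.1 q.2.2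
  have hD : (D + D).Finite := (Set.finite_range _).add (Set.finite_range _)
  have hapices : {a : Fin n → ℝ | ∀ k, a k ∈ D + D}.Finite := Set.Finite.pi' fun _ => hD
  refine (hapices.image2 halfSpace Set.finite_univ).subset ?_
  rintro _ ⟨a, I, j, ha, rfl⟩
  refine ⟨fun k => a k - a j, fun k => ?_, I, Set.mem_univ I, halfSpace_sub_const a I (a j)⟩
  obtain ⟨i, ⟨r, hri, hrk⟩, ⟨s, hsi, hsj⟩⟩ := ha.exists_typeSet_inter_nonempty k
  refine ⟨a k - a i, ⟨(r, k, i), ?_⟩, a i - a j, ⟨(s, i, j), ?_⟩, sub_add_sub_cancel _ _ _⟩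
  · exact (sub_eq_sub_of_mem_typeSet hri hrk).symm
  · exact (sub_eq_sub_of_mem_typeSet hsj hsi).symm

theorem exists_eqOn_cover_touch [NeZero p] (v : Fin p → Fin n → ℝ) (hI : I.Nonempty)
    (b : Fin n → ℝ) :
    ∃ a, Set.EqOn a b I ∧ (⋃ i ∈ I, typeSet v a i) = Set.univ ∧
      ∀ k ∉ I, ∃ i ∈ I, (typeSet v a i ∩ typeSet v a k).Nonempty := by
  classical
  choose top htopI htop using fun r =>
    Set.exists_max_image I (fun i => v r i - b i) I.toFinite hI
  let m : Fin p → ℝ := fun r => v r (top r) - b (top r)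
  choose s hs using fun k => Finite.exists_max fun r => v r k - m r
  let a : Fin n → ℝ := I.piecewise b fun k => v (s k) k - m (s k)
  have haI : Set.EqOn a b I := Set.piecewise_eqOn _ _ _
  have ha_notMem : ∀ k ∉ I, a k = v (s k) k - m (s k) :=
    fun k hk => Set.piecewise_eq_of_notMem _ _ _ hk
  have htop_eq : ∀ r, v r (top r) - a (top r) = m r := fun r => by rw [haI (htopI r)]
  have htop_mem : ∀ r, r ∈ typeSet v a (top r) := fun r k => by
    rw [htop_eq]
    by_cases hk : k ∈ I
    · exact haI hk ▸ htop r k hk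
    · linarith [ha_notMem k hk, hs k r]
  refine ⟨a, haI, iUnion_typeSet_eq_univ_iff.2 fun r => ⟨top r, htopI r, htop_mem r⟩,
    fun k hk => ⟨top (s k), htopI _, s k, htop_mem _, ?_⟩⟩
  exact mem_typeSet_of_sub_le_sub (htop_mem (s k)) (by linarith [htop_eq (s k), ha_notMem k hk])

theorem not_inter_typeSet_subset_of_sub_lt_sub
    (hcover : (⋃ i ∈ I, typeSet v a i) = Set.univ) {r : Fin p} (hri : v r i - a i = v r j - a j)
    (hrI : ∀ h ∈ I, h ≠ i → v r h - a h < v r j - a j) :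
    ¬ typeSet v a i ∩ typeSet v a j ⊆ ⋃ h ∈ I \ {i}, typeSet v a h := by
  have heq : ∀ h ∈ I, r ∈ typeSet v a h → h = i :=
    fun h hh hrh => by_contra fun hne => (hrI h hh hne).not_ge (hrh j)
  have hr_mem : r ∈ typeSet v a i := by
    obtain ⟨h, hh, hrh⟩ := iUnion_typeSet_eq_univ_iff.1 hcover r
    exact heq h hh hrh ▸ hrh
  intro hsub
  have hr_union := hsub ⟨hr_mem, mem_typeSet_of_sub_le_sub hr_mem hri.le⟩
  simp only [Set.mem_iUnion] at hr_union
  obtain ⟨h, ⟨hh, hne⟩, hrh⟩ := hr_union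
  exact hne (heq h hh hrh)

theorem exists_isPseudovertex_of_irredundant [NeZero p] {b : Fin n → ℝ} (hj : j ∉ I)
    (hreach : ∀ r, ∃ i ∈ I, b i ≤ v r i - v r j)
    (hirred : ∀ i ∈ I, ∃ r, v r i - v r j = b i ∧ ∀ h ∈ I, h ≠ i → v r h - v r j < b h) :
    ∃ a, IsPseudovertex v a I j ∧ a j = 0 ∧ Set.EqOn a b I := by
  have hI : I.Nonempty := (hreach 0).imp fun _ h => h.1
  obtain ⟨a, haI, hcover, htouch⟩ := exists_eqOn_cover_touch v hI b
  have haj_nonpos : a j ≤ 0 := by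
    obtain ⟨_, -, r, -, hrj⟩ := htouch j hj
    obtain ⟨h, hh, hbh⟩ := hreach r
    linarith [hrj h, haI hh]
  have haj_nonneg : 0 ≤ a j := by
    obtain ⟨i, hi⟩ := hI
    obtain ⟨r, hri, hrI⟩ := hirred i hi
    obtain ⟨h, hh, hrh⟩ := iUnion_typeSet_eq_univ_iff.1 hcover r
    have hrh_le : v r h - v r j ≤ b h := by
      rcases eq_or_ne h i with rfl | hne
      exacts [hri.le, (hrI h hh hne).le]
    linarith [hrh j, haI hh]
  have haj : a j = 0 := haj_nonpos.antisymm haj_nonneg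
  refine ⟨a, ⟨hI, Set.ne_univ_iff_exists_notMem _ |>.2 ⟨j, hj⟩, hj, hcover, htouch,
    fun i hi => ?_⟩, haj, haI⟩
  obtain ⟨r, hri, hrI⟩ := hirred i hi
  exact not_inter_typeSet_subset_of_sub_lt_sub hcover (by linarith [haI hi])
    fun h hh hne => by linarith [hrI h hh hne, haI hh]

theorem exists_pseudovertexHalfSpace_notMem [NeZero p] {y : Fin n → ℝ} (hy : y ∉ tropPoly v) :
    ∃ H ∈ pseudovertexHalfSpaces v, y ∉ H := by
  obtain ⟨j, hj⟩ : ∃ j, ∀ r, ∃ i, v r j - y j < v r i - y i := by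
    by_contra! hcon
    exact hy (mem_tropPoly_of_forall_typeSet_nonempty hcon)
  obtain ⟨I, b, hreach, hyb, hirred⟩ := exists_irredundant_thresholds
    (fun r i => v r i - v r j) (fun i => y i - y j)
    fun r => (hj r).imp fun i hi => by linarith
  have hjI : j ∉ I := fun hjI => by
    obtain ⟨r, hr, -⟩ := hirred j hjI
    linarith [hyb j hjI]
  obtain ⟨a, ha, haj, haI⟩ := exists_isPseudovertex_of_irredundant hjI hreach hirred
  refine ⟨halfSpace a I, ⟨a, I, j, ha, rfl⟩, ?_⟩
  rintro ⟨i, hi, hle⟩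
  linarith [hle j hjI, hyb i hi, haI hi]

theorem pure_eq_sInter_pseudovertex_halfspaces_general [NeZero p] (v : Fin p → Fin n → ℝ) :
    (pseudovertexHalfSpaces v).Finite ∧ tropPoly v = ⋂₀ pseudovertexHalfSpaces v := by
  refine ⟨finite_pseudovertexHalfSpaces v, subset_antisymm (Set.subset_sInter ?_) fun y hy => ?_⟩
  · rintro _ ⟨a, I, j, ha, rfl⟩
    exact tropPoly_subset_halfSpace ha.nonempty ha.cover
  · by_contra hyP
    obtain ⟨H, hH, hyH⟩ := exists_pseudovertexHalfSpace_notMem hyP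
    exact hyH (hy H hH)

end TropicalPolytope

/-- If the tropical polytope `P` generated by `p ≥ 1` points is pure, then the half-spaces `H(a,I)`
associated with the `(I,j)`-pseudovertices `a` of `P` form an external representation of `P`:
there are finitely many of them, and their intersection is `P`. -/
theorem pure_eq_sInter_pseudovertex_halfspaces {n p : ℕ} [NeZero n] (hn : 2 ≤ n) (hp : 1 ≤ p)
    (v : Fin p → Fin n → ℝ) (hpure : IsPure (tropPoly v)) :
    (pseudovertexHalfSpaces v).Finite ∧ tropPoly v = ⋂₀ pseudovertexHalfSpaces v := by
  have : NeZero p := ⟨Nat.one_le_iff_ne_zero.1 hp⟩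
  exact pure_eq_sInter_pseudovertex_halfspaces_general v
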